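/- For every semi-integer a (2a ∈ ℤ, a ≠ 0), the quasi-affine set V^a ⊂ ℂ^{q+2n+1} has dimension at most n, where the dimension of a quasi-affine set (with the Zariski topology) is the supremum of the lengths d of chains Z_0 ⊊ Z_1 ⊊ ⋯ ⊊ Z_d of nonempty irreducible closed subsets. -/

import Mathlib

/-- Index type for the mutual-distance variables `R_{ij}`, `1 ≤ i < j ≤ n`. -/
abbrev PairIdx (n : ℕ) := {p : Fin n × Fin n // p.1 < p.2}

/-- The polynomial `R_{ij}` (for an unordered pair `{i,j}`; junk value `0` if `i = j`). -/
noncomputable def Rvar {n : ℕ} (i j : Fin n) : MvPolynomial (PairIdx n) ℂ :=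
  if h : i < j then MvPolynomial.X ⟨(i, j), h⟩
  else if h' : j < i then MvPolynomial.X ⟨(j, i), h'⟩ else 0

/-- The polynomial Cayley–Menger matrix `A(R)` over `ℂ[R_{12}, …, R_{(n−1)n}]`. -/
noncomputable def cmPolyMatrix (n : ℕ) :
    Matrix (Fin (n + 1)) (Fin (n + 1)) (MvPolynomial (PairIdx n) ℂ) :=
  Matrix.of fun i j =>
    Fin.cases (Fin.cases 0 (fun _ => 1) j)
      (fun i' => Fin.cases 1 (fun j' => Rvar i' j' ^ 2) j) i

/-- The Cayley–Menger determinant polynomial `F = det A(R)`. -/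
noncomputable def Fpoly (n : ℕ) : MvPolynomial (PairIdx n) ℂ := (cmPolyMatrix n).det

/-- `∂F/∂R_{ij}` for an unordered pair `{i,j}` (junk value `0` if `i = j`). -/
noncomputable def dF {n : ℕ} (i j : Fin n) : MvPolynomial (PairIdx n) ℂ :=
  if h : i < j then MvPolynomial.pderiv (⟨(i, j), h⟩ : PairIdx n) (Fpoly n)
  else if h' : j < i then MvPolynomial.pderiv (⟨(j, i), h'⟩ : PairIdx n) (Fpoly n) else 0

/-- `(∂F/∂R_{ij})` evaluated at `r`. -/
noncomputable def evalDF {n : ℕ} (r : PairIdx n → ℂ) (i j : Fin n) : ℂ :=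
  MvPolynomial.eval r (dF i j)

/-- `r_{ij}` as a symmetric function of the coordinates indexed by ordered pairs. -/
noncomputable def rC {n : ℕ} (r : PairIdx n → ℂ) (i j : Fin n) : ℂ :=
  if h : i < j then r ⟨(i, j), h⟩ else if h' : j < i then r ⟨(j, i), h'⟩ else 0

/-- The numeric Cayley–Menger matrix `A(r²)` of the numbers `r_{ij}`. -/
noncomputable def cmOf {n : ℕ} (r : PairIdx n → ℂ) :
    Matrix (Fin (n + 1)) (Fin (n + 1)) ℂ :=
  Matrix.of fun i j =>
    Fin.cases (Fin.cases 0 (fun _ => 1) j)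
      (fun i' => Fin.cases 1 (fun j' => rC r i' j' ^ 2) j) i

/-- `Ψ^a_i` evaluated at a point (with `c2 = 2a`): for `a < 0`,
`∑_{j≠i} r_{ij}^{−2a+1} (∂F/∂R_{ij})(r) z_j`; for `a > 0`,
`∑_{j≠i} (∏_{(k,l)≠(i,j)} r_{kl}^{2a−1}) (∂F/∂R_{ij})(r) z_j`. -/
noncomputable def Psi {n : ℕ} (c2 : ℤ) (r : PairIdx n → ℂ) (z : Fin n → ℂ) (i : Fin n) : ℂ :=
  if c2 < 0 then
    ∑ j ∈ Finset.univ \ {i}, rC r i j ^ (1 - c2).toNat * evalDF r i j * z j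
  else
    ∑ j ∈ Finset.univ \ {i},
      (∏ p ∈ Finset.univ.filter
          (fun p : PairIdx n => ¬((p.1.1 = i ∧ p.1.2 = j) ∨ (p.1.1 = j ∧ p.1.2 = i))),
        r p ^ (c2 - 1).toNat) * evalDF r i j * z j

/-- The coordinates of the affine space `ℂ^{q+2n+1}`: `R`-coordinates, `Z`-coordinates,
the coordinate `Δ`, and `M`-coordinates. -/
abbrev TVar (n : ℕ) := PairIdx n ⊕ (Fin n ⊕ (Unit ⊕ Fin n))

/-- A point of `ℂ^{q+2n+1}`. -/
abbrev Pt (n : ℕ) := TVar n → ℂ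

def rPart {n : ℕ} (P : Pt n) : PairIdx n → ℂ := fun p => P (Sum.inl p)
def zPart {n : ℕ} (P : Pt n) : Fin n → ℂ := fun i => P (Sum.inr (Sum.inl i))
def dPart {n : ℕ} (P : Pt n) : ℂ := P (Sum.inr (Sum.inr (Sum.inl ())))
def mPart {n : ℕ} (P : Pt n) : Fin n → ℂ := fun i => P (Sum.inr (Sum.inr (Sum.inr i)))

/-- `g^a_{ij}` evaluated at a point: `R_{ij}^{2a} − 1 − Z_i Z_j` if `a > 0`, and
`R_{ij}^{−2a}(Z_i Z_j + 1) − 1` if `a < 0` (with `c2 = 2a`). -/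
noncomputable def gEval {n : ℕ} (c2 : ℤ) (P : Pt n) (p : PairIdx n) : ℂ :=
  if 0 < c2 then rPart P p ^ c2.toNat - 1 - zPart P p.1.1 * zPart P p.1.2
  else rPart P p ^ (-c2).toNat * (zPart P p.1.1 * zPart P p.1.2 + 1) - 1

/-- `Γ_l` evaluated at a point: `Γ_0 = ∑ M_j Z_j` and
`Γ_l = Δ + ∑ M_j Z_j R_{jl}²` for `l = 1, …, n`. -/
noncomputable def GammaEval {n : ℕ} (P : Pt n) (l : Fin (n + 1)) : ℂ :=
  Fin.cases (∑ j, mPart P j * zPart P j)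
    (fun l' => dPart P + ∑ j, mPart P j * zPart P j * rC (rPart P) j l' ^ 2) l

/-- The algebraic set `Ṽ^a`: common zero set of the `g^a_{ij}`, `F`, and the `Γ_l`. -/
noncomputable def Vtilde (n : ℕ) (c2 : ℤ) : Set (Pt n) :=
  {P | (∀ p, gEval c2 P p = 0) ∧ (cmOf (rPart P)).det = 0 ∧ ∀ l, GammaEval P l = 0}

/-- `W_1 = {∏_{i<j} R_{ij} = 0}`. -/
noncomputable def W1 (n : ℕ) : Set (Pt n) := {P | ∏ p, rPart P p = 0}

/-- `W_2 = {F_{ij} = 0 for all 0 ≤ i, j ≤ n}` (the `(i,j)` cofactor of the Cayley–Menger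
matrix is the `(j,i)` entry of its adjugate). -/
noncomputable def W2 (n : ℕ) : Set (Pt n) :=
  {P | ∀ i j : Fin (n + 1), (cmOf (rPart P)).adjugate j i = 0}

/-- `W_3^a = {Ψ^a_1 = ⋯ = Ψ^a_n = 0}`. -/
noncomputable def W3 (n : ℕ) (c2 : ℤ) : Set (Pt n) :=
  {P | ∀ i, Psi c2 (rPart P) (zPart P) i = 0}

/-- The quasi-affine set `V^a = Ṽ^a \ (W_1 ∪ W_2 ∪ W_3^a)`. -/
noncomputable def Vset (n : ℕ) (c2 : ℤ) : Set (Pt n) :=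
  Vtilde n c2 \ (W1 n ∪ W2 n ∪ W3 n c2)

/-- A subset of affine space `ℂ^σ` is Zariski-closed if it is the common zero set of a
collection of polynomials. -/
def IsZClosed {σ : Type} (S : Set (σ → ℂ)) : Prop :=
  ∃ T : Set (MvPolynomial σ ℂ), S = {x | ∀ f ∈ T, MvPolynomial.eval x f = 0}

/-- A subset is irreducible (in the Zariski topology): it is nonempty, and whenever it is
covered by two Zariski-closed sets it is contained in one of them. (For a subset of a
quasi-affine set this coincides with irreducibility in the subspace topology.) -/
def IsIrr {σ : Type} (S : Set (σ → ℂ)) : Prop :=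
  S.Nonempty ∧ ∀ C₁ C₂ : Set (σ → ℂ), IsZClosed C₁ → IsZClosed C₂ →
    S ⊆ C₁ ∪ C₂ → S ⊆ C₁ ∨ S ⊆ C₂

/-- `S` is an irreducible component of `W`: a maximal irreducible subset of `W`. -/
def IsIrrComponentOf {σ : Type} (W S : Set (σ → ℂ)) : Prop :=
  S ⊆ W ∧ IsIrr S ∧ ∀ S' : Set (σ → ℂ), S' ⊆ W → IsIrr S' → S ⊆ S' → S' = S

/-- The dimension of `V` (with its induced Zariski topology) is at most `N`: every chain
`Z_0 ⊊ Z_1 ⊊ ⋯ ⊊ Z_d` of nonempty irreducible subsets of `V` that are closed in `V`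
has length `d ≤ N`. -/
def DimLE {σ : Type} (V : Set (σ → ℂ)) (N : ℕ) : Prop :=
  ∀ (d : ℕ) (Z : Fin (d + 1) → Set (σ → ℂ)),
    StrictMono Z → (∀ i, (Z i).Nonempty) → (∀ i, IsIrr (Z i)) →
    (∀ i, ∃ C, IsZClosed C ∧ Z i = V ∩ C) → d ≤ N

/-!
Let `S ⊆ V^a` be irreducible, let `K` be the function field of its closure and let
`(r, z, Δ, m)` be the generic point of `S` in `K`. Suppose `Ψ^a_i ≠ 0` at this point, and choose
as parameters `m_i` and, for each `j ≠ i`, `z_j` if `z_j ≠ 0` and `m_j` otherwise. A derivation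
`D` of `K` over `ℂ` killing these `n` parameters kills every coordinate:

* Differentiating `g^a = 0` expresses `D r_{jk}` through `D (z_j z_k)`, which turns `D F = 0` into
  `∑ Ψ^a_j D z_j = 0`. As `D z_j = 0` for `j ≠ i`, also `D z_i = 0`, and then `D r = 0`.
* The vector `u = (Δ, m_1 z_1, …, m_n z_n)` satisfies `A(r) u = 0`, hence `A(r) D u = 0`, and
  `D u_i = 0`. By Jacobi's formula `∂F/∂R_{jk} = 4 R_{jk} F_{jk}`, so `Ψ^a_i ≠ 0` forces some
  cofactor `F_{il}` to be nonzero; replacing row `l` of `A(r)` by the equation `u_i = 0` thus gives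
  an invertible matrix, so `D u = 0` and with it `D Δ = 0` and `D m = 0`.

In characteristic zero this makes `K` algebraic over the subfield generated by the parameters, so
the coordinate ring of the closure of `S` has Krull dimension at most `n`.
-/

section Derivations

open MvPolynomial Matrix

theorem derivation_prod {R A M ι : Type*} [CommSemiring R] [CommSemiring A] [AddCommMonoid M]
    [Algebra R A] [Module A M] [Module R M] [DecidableEq ι] (D : Derivation R A M) (s : Finset ι)
    (f : ι → A) : D (∏ i ∈ s, f i) = ∑ i ∈ s, (∏ j ∈ s.erase i, f j) • D (f i) := by
  induction s using Finset.induction_on with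
  | empty => simp
  | insert a s ha ih =>
    rw [Finset.prod_insert ha, D.leibniz, ih, Finset.sum_insert ha, Finset.erase_insert ha,
      add_comm, Finset.smul_sum]
    congr 1
    refine Finset.sum_congr rfl fun i hi => ?_
    rw [Finset.erase_insert_of_ne (ne_of_mem_of_not_mem hi ha).symm, Finset.prod_insert
      (fun h => ha (Finset.mem_of_mem_erase h)), smul_smul]

theorem derivation_det {R A ι : Type*} [CommRing R] [CommRing A] [Algebra R A] [DecidableEq ι]
    [Fintype ι] (D : Derivation R A A) (B : Matrix ι ι A) :
    D B.det = ∑ i, ∑ j, B.adjugate i j * D (B j i) := by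
  have sum_column (i : ι) :
      ∑ j, B.adjugate i j * D (B j i) = (B.updateCol i fun j => D (B j i)).det := by
    rw [← cramer_apply, cramer_eq_adjugate_mulVec]
    rfl
  simp_rw [sum_column, det_apply', map_sum]
  rw [Finset.sum_comm]
  refine Finset.sum_congr rfl fun σ _ => ?_
  rw [D.leibniz, D.map_intCast, smul_zero, add_zero, derivation_prod, Finset.smul_sum]
  refine Finset.sum_congr rfl fun i _ => ?_
  rw [← Finset.prod_erase_mul _ _ (Finset.mem_univ i), updateCol_self, smul_eq_mul, smul_eq_mul]
  congr 2
  exact Finset.prod_congr rfl fun j hj => (updateCol_ne (Finset.ne_of_mem_erase hj)).symm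

theorem pow_succ_mul_derivation_of_pow_mul_eq_one {R A : Type*} [CommRing R] [CommRing A]
    [Algebra R A] (D : Derivation R A A) {x y : A} {k : ℕ} (h : x ^ k * y = 1) :
    x ^ (k + 1) * D y = -k * D x := by
  have D_eq := congrArg D h
  rw [D.leibniz, D.leibniz_pow, D.map_one_eq_zero] at D_eq
  simp only [smul_eq_mul, nsmul_eq_mul] at D_eq
  cases k with
  | zero => simp [show D y = 0 by simpa using D_eq]
  | succ k =>
    rw [Nat.add_sub_cancel] at D_eq
    push_cast at D_eq ⊢
    linear_combination x * D_eq - (k + 1) * D x * h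

theorem derivation_mulVec {R A ι κ : Type*} [CommSemiring R] [CommSemiring A] [Algebra R A]
    [Fintype κ] (D : Derivation R A A) {B : Matrix ι κ A} (hB : ∀ i j, D (B i j) = 0) (v : κ → A) :
    D ∘ (B *ᵥ v) = B *ᵥ (D ∘ v) := by
  ext i
  simp [mulVec, dotProduct, hB]

theorem eq_zero_of_mulVec_eq_zero_of_adjugate_ne_zero {ι A : Type*} [Fintype ι] [DecidableEq ι]
    [CommRing A] [IsDomain A] {B : Matrix ι ι A} {v : ι → A} {i j : ι} (hBv : B *ᵥ v = 0)
    (hadj : B.adjugate i j ≠ 0) (hvi : v i = 0) : v = 0 := by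
  rw [adjugate_apply] at hadj
  refine eq_zero_of_mulVec_eq_zero hadj ?_
  rw [updateRow_mulVec, hBv]
  simp [hvi]

theorem derivation_aeval {R A M σ : Type*} [CommSemiring R] [CommSemiring A] [AddCommMonoid M]
    [Algebra R A] [Module A M] [Module R M] [Fintype σ] (D : Derivation R A M) (x : σ → A)
    (f : MvPolynomial σ R) : D (aeval x f) = ∑ i, aeval x (pderiv i f) • D (x i) := by
  classical
  induction f using MvPolynomial.induction_on with
  | C a => simp
  | add f g hf hg => simp only [map_add, hf, hg, add_smul, Finset.sum_add_distrib]
  | mul_X f i hf =>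
    simp [hf, add_smul, Finset.sum_add_distrib, Finset.smul_sum, Pi.single_apply, smul_smul,
      apply_ite, ite_smul]

theorem ringKrullDim_le_of_trdeg_le {k A : Type*} [Field k] [CommRing A] [Nontrivial A]
    [Algebra k A] [Algebra.FiniteType k A] {n : ℕ} (h : Algebra.trdeg k A ≤ n) :
    ringKrullDim A ≤ n := by
  obtain ⟨s, g, hg, hint⟩ := exists_integral_inj_algHom_of_fg k A
  algebraize [g.toRingHom]
  have : Algebra.IsIntegral (MvPolynomial (Fin s) k) A := ⟨hint⟩
  have s_le : s ≤ n := by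
    simpa [MvPolynomial.trdeg_of_isDomain] using
      (lift_trdeg_le_of_injective g hg).trans (Cardinal.lift_le.2 h)
  calc ringKrullDim A ≤ ringKrullDim (MvPolynomial (Fin s) k) :=
        Order.krullDim_le_of_strictMono (PrimeSpectrum.comap (algebraMap _ A))
          fun p q hpq => Ideal.IsIntegral.comap_lt_comap (I := p.asIdeal) (J := q.asIdeal) hpq
    _ = s := by simp [MvPolynomial.ringKrullDim_of_isNoetherianRing]
    _ ≤ n := by exact_mod_cast s_le

theorem derivation_eq_zero_of_algebraMap {k A K : Type*} [CommRing k] [CommRing A] [Field K]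
    [Algebra A K] [IsFractionRing A K] [Algebra k K] {D : Derivation k K K}
    (hD : ∀ a : A, D (algebraMap A K a) = 0) : D = 0 := by
  ext x
  obtain ⟨a, b, -, rfl⟩ := IsFractionRing.div_surjective (A := A) x
  simp [D.leibniz_div, hD]

theorem isAlgebraic_adjoin_of_forall_derivation {k K : Type*} [Field k] [Field K]
    [Algebra k K] [Algebra.EssFiniteType k K] {s : Set K}
    (hs : ∀ D : Derivation k K K, (∀ x ∈ s, D x = 0) → D = 0) :
    Algebra.IsAlgebraic (Algebra.adjoin k s) K := by
  let L := IntermediateField.adjoin k s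
  have derivation_subsingleton : Subsingleton (Derivation L K K) := by
    refine subsingleton_of_forall_eq 0 fun D => Derivation.ext fun x => ?_
    refine DFunLike.congr_fun (hs (D.restrictScalars k) fun x hx => ?_) x
    exact D.map_algebraMap ⟨x, IntermediateField.subset_adjoin k s hx⟩
  have : Subsingleton (Module.Dual K (Ω[K⁄L])) :=
    (KaehlerDifferential.linearMapEquivDerivation L K).toEquiv.subsingleton
  have : Algebra.FormallyUnramified L K := ⟨(Module.subsingleton_dual_iff K).1 this⟩
  have : Algebra.EssFiniteType L K := .of_comp k L K
  have : Algebra.IsSeparable L K := Algebra.FormallyUnramified.isSeparable L K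
  exact IntermediateField.isAlgebraic_adjoin_iff_top.1 inferInstance

theorem ringKrullDim_le_of_forall_derivation {k A K : Type*} [Field k] [CommRing A] [Algebra k A]
    [Algebra.FiniteType k A] [Field K] [Algebra A K] [IsFractionRing A K] [Algebra k K]
    [IsScalarTower k A K] {n : ℕ} (w : Fin n → K)
    (hw : ∀ D : Derivation k K K, (∀ j, D (w j) = 0) → ∀ a : A, D (algebraMap A K a) = 0) :
    ringKrullDim A ≤ n := by
  have : Nontrivial A := (algebraMap A K).domain_nontrivial
  have : Algebra.EssFiniteType A K := .of_isLocalization K (nonZeroDivisors A)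
  have : Algebra.EssFiniteType k K := .comp k A K
  have : Algebra.IsAlgebraic (Algebra.adjoin k (Set.range w)) K :=
    isAlgebraic_adjoin_of_forall_derivation fun D hD =>
      derivation_eq_zero_of_algebraMap (hw D fun j => hD _ ⟨j, rfl⟩)
  have trdeg_le : Algebra.trdeg k K ≤ n :=
    (Algebra.IsAlgebraic.trdeg_le_cardinalMk k (Set.range w)).trans <| by
      simpa using Cardinal.mk_range_le_lift (f := w)
  refine ringKrullDim_le_of_trdeg_le (k := k) ?_
  simpa using (lift_trdeg_le_of_injective (IsScalarTower.toAlgHom k A K)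
    (IsFractionRing.injective A K)).trans (Cardinal.lift_le.2 trdeg_le)

end Derivations

section Zariski

open MvPolynomial

variable {σ : Type}

theorem isZClosed_setOf_eval_eq_zero (f : MvPolynomial σ ℂ) : IsZClosed {x | eval x f = 0} :=
  ⟨{f}, by simp⟩

theorem IsIrr.isPrime_vanishingIdeal {S : Set (σ → ℂ)} (hS : IsIrr S) :
    (vanishingIdeal ℂ S).IsPrime where
  ne_top' := by
    obtain ⟨x, hx⟩ := hS.1
    rw [Ideal.ne_top_iff_one]
    exact fun h => by simpa using h x hx
  mem_or_mem' {f g} hfg := by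
    simpa [Set.subset_def] using
      hS.2 _ _ (isZClosed_setOf_eval_eq_zero f) (isZClosed_setOf_eval_eq_zero g)
        fun x hx => mul_eq_zero.1 ((map_mul (eval x) f g).symm.trans (hfg x hx))

theorem vanishingIdeal_lt_vanishingIdeal {V S T : Set (σ → ℂ)} (hST : S ⊂ T) (hTV : T ⊆ V)
    {C : Set (σ → ℂ)} (hC : IsZClosed C) (hS : S = V ∩ C) :
    vanishingIdeal ℂ T < vanishingIdeal ℂ S := by
  obtain ⟨P, rfl⟩ := hC
  refine lt_of_le_not_ge (vanishingIdeal_anti_mono hST.le) fun hle => hST.not_ge fun x hx => ?_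
  rw [hS] at hle ⊢
  exact ⟨hTV hx, fun f hf => hle (fun y hy => hy.2 f hf) x hx⟩

theorem dimLE_of_forall_ringKrullDim_le {V : Set (σ → ℂ)} {n : ℕ}
    (h : ∀ S ⊆ V, IsIrr S → ringKrullDim (MvPolynomial σ ℂ ⧸ vanishingIdeal ℂ S) ≤ n) :
    DimLE V n := by
  intro d Z hZ _ hirr hclosed
  have subset_V (i) : Z i ⊆ V := by
    obtain ⟨C, -, hC⟩ := hclosed i
    exact hC ▸ Set.inter_subset_left
  have ideal_lt {i j : Fin (d + 1)} (hij : i < j) :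
      vanishingIdeal ℂ (Z j) < vanishingIdeal ℂ (Z i) := by
    obtain ⟨C, hC, hZi⟩ := hclosed i
    exact vanishingIdeal_lt_vanishingIdeal (hZ hij) (subset_V j) hC hZi
  let I := vanishingIdeal ℂ (Z (Fin.last d))
  let primeChain : LTSeries (PrimeSpectrum.zeroLocus (I : Set (MvPolynomial σ ℂ))) :=
    { length := d
      toFun := fun i => ⟨⟨vanishingIdeal ℂ (Z i.rev), (hirr i.rev).isPrime_vanishingIdeal⟩,
        vanishingIdeal_anti_mono (hZ.monotone (Fin.le_last i.rev))⟩
      step := fun i => ideal_lt (Fin.rev_lt_rev.2 Fin.castSucc_lt_succ) }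
  have length_le := (Order.LTSeries.length_le_krullDim primeChain).trans
    ((ringKrullDim_quotient I).symm.le.trans (h _ (subset_V _) (hirr _)))
  exact_mod_cast length_le

/-- `ξ` is a generic point of `S` with coordinates in a field `K`: the polynomials vanishing at
`ξ` are exactly those vanishing on `S`. -/
def IsZGenericPoint {K : Type*} [Field K] [Algebra ℂ K] (S : Set (σ → ℂ)) (ξ : σ → K) : Prop :=
  ∀ f : MvPolynomial σ ℂ, aeval ξ f = 0 ↔ ∀ x ∈ S, eval x f = 0

theorem dimLE_of_forall_isZGenericPoint [Finite σ] {V : Set (σ → ℂ)} {n : ℕ}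
    (h : ∀ S ⊆ V, IsIrr S → ∀ (K : Type) [Field K] [Algebra ℂ K] (ξ : σ → K),
      IsZGenericPoint S ξ → ∃ w : Fin n → K,
        ∀ D : Derivation ℂ K K, (∀ j, D (w j) = 0) → ∀ v, D (ξ v) = 0) : DimLE V n := by
  refine dimLE_of_forall_ringKrullDim_le fun S hSV hS => ?_
  have := hS.isPrime_vanishingIdeal
  let A := MvPolynomial σ ℂ ⧸ vanishingIdeal ℂ S
  let K := FractionRing A
  let φ : MvPolynomial σ ℂ →ₐ[ℂ] K :=
    (IsScalarTower.toAlgHom ℂ A K).comp (Ideal.Quotient.mkₐ ℂ (vanishingIdeal ℂ S))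
  have φ_eq : φ = aeval (φ ∘ X) := aeval_unique φ
  have generic : IsZGenericPoint S (φ ∘ X) := fun f => by
    rw [← φ_eq]
    exact (FaithfulSMul.algebraMap_eq_zero_iff A K).trans Ideal.Quotient.eq_zero_iff_mem
  obtain ⟨w, hw⟩ := h S hSV hS K (φ ∘ X) generic
  refine ringKrullDim_le_of_forall_derivation (k := ℂ) w fun D hD a => ?_
  obtain ⟨f, rfl⟩ := Ideal.Quotient.mk_surjective a
  cases nonempty_fintype σ
  change D (φ f) = 0
  rw [φ_eq, derivation_aeval]
  simp only [hw D hD, smul_zero, Finset.sum_const_zero]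

end Zariski

section CayleyMenger

open MvPolynomial Matrix

variable {n : ℕ}

theorem sum_sum_eq_sum_pairIdx {M : Type*} [AddCommMonoid M] {f : Fin n → Fin n → M}
    (hf : ∀ i, f i i = 0) :
    ∑ i, ∑ j, f i j = ∑ p : PairIdx n, (f p.1.1 p.1.2 + f p.1.2 p.1.1) := by
  have split (i j : Fin n) :
      f i j = (if i < j then f i j else 0) + if j < i then f i j else 0 := by
    rcases lt_trichotomy i j with h | rfl | h
    · simp [h, h.not_gt]
    · simp [hf]
    · simp [h, h.not_gt]
  have sum_upper (g : Fin n → Fin n → M) :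
      ∑ i, ∑ j, (if i < j then g i j else 0) = ∑ p : PairIdx n, g p.1.1 p.1.2 := by
    rw [← Fintype.sum_prod_type', ← Finset.sum_filter]
    exact Finset.sum_subtype _ (by simp) fun x : Fin n × Fin n => g x.1 x.2
  calc ∑ i, ∑ j, f i j
      = ∑ i, ∑ j, (if i < j then f i j else 0) + ∑ i, ∑ j, (if j < i then f i j else 0) := by
        simp only [← Finset.sum_add_distrib, ← split]
    _ = ∑ p : PairIdx n, f p.1.1 p.1.2 + ∑ p : PairIdx n, f p.1.2 p.1.1 := by
        rw [sum_upper f, Finset.sum_comm, sum_upper fun j i => f i j]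
    _ = ∑ p : PairIdx n, (f p.1.1 p.1.2 + f p.1.2 p.1.1) := Finset.sum_add_distrib.symm

theorem sum_ne_eq_sum_pairIdx {M : Type*} [AddCommMonoid M] (f : Fin n → Fin n → M) (i : Fin n) :
    ∑ j ∈ Finset.univ \ {i}, f i j = ∑ p : PairIdx n,
      (Pi.single p.1.1 (f p.1.1 p.1.2) + Pi.single p.1.2 (f p.1.2 p.1.1) : Fin n → M) i := by
  have sum_eq := sum_sum_eq_sum_pairIdx
    (f := fun k j => if k = j then 0 else (Pi.single k (f k j) : Fin n → M) i) fun k => if_pos rfl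
  rw [Finset.sum_eq_single i (by simp +contextual [eq_comm]) (by simp)] at sum_eq
  calc ∑ j ∈ Finset.univ \ {i}, f i j
      = ∑ j, if i = j then 0 else (Pi.single i (f i j) : Fin n → M) i := by
        rw [Finset.sdiff_singleton_eq_erase, ← Finset.filter_ne, Finset.sum_filter]
        simp
    _ = _ := sum_eq
    _ = _ := Finset.sum_congr rfl fun p _ => by simp [p.2.ne, p.2.ne']

theorem Rvar_comm (i j : Fin n) : Rvar i j = Rvar j i := by
  rcases lt_trichotomy i j with h | rfl | h <;> simp [Rvar, *, not_lt_of_gt]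

theorem Rvar_self (i : Fin n) : Rvar i i = 0 := by
  simp [Rvar]

theorem Rvar_pairIdx (p : PairIdx n) : Rvar p.1.1 p.1.2 = X p := by
  simp [Rvar, p.2]

@[simp]
theorem cmPolyMatrix_zero_zero : cmPolyMatrix n 0 0 = 0 := rfl

@[simp]
theorem cmPolyMatrix_zero_succ (j : Fin n) : cmPolyMatrix n 0 j.succ = 1 := rfl

@[simp]
theorem cmPolyMatrix_succ_zero (i : Fin n) : cmPolyMatrix n i.succ 0 = 1 := rfl

@[simp]
theorem cmPolyMatrix_succ_succ (i j : Fin n) : cmPolyMatrix n i.succ j.succ = Rvar i j ^ 2 := rfl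

theorem cmPolyMatrix_isSymm : (cmPolyMatrix n).IsSymm := by
  ext i j : 1
  cases i using Fin.cases <;> cases j using Fin.cases <;> simp [Rvar_comm]

theorem pderiv_Fpoly (p : PairIdx n) :
    pderiv p (Fpoly n) = 4 * X p * (cmPolyMatrix n).adjugate p.1.1.succ p.1.2.succ := by
  calc pderiv p (Fpoly n)
      = ∑ i : Fin n, ∑ j : Fin n, (cmPolyMatrix n).adjugate i.succ j.succ *
          (2 * Rvar i j * pderiv p (Rvar i j)) := by
        rw [Fpoly, derivation_det]
        simp [Fin.sum_univ_succ, Rvar_comm, mul_assoc]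
    _ = ∑ q : PairIdx n, 4 * X q * (cmPolyMatrix n).adjugate q.1.1.succ q.1.2.succ *
          pderiv p (X q) := by
        rw [sum_sum_eq_sum_pairIdx (by simp [Rvar_self])]
        refine Finset.sum_congr rfl fun q _ => ?_
        rw [Rvar_comm q.1.2, cmPolyMatrix_isSymm.adjugate.apply q.1.1.succ, Rvar_pairIdx]
        ring
    _ = _ := by simp [Pi.single_apply]

theorem eval_Rvar (r : PairIdx n → ℂ) (i j : Fin n) : eval r (Rvar i j) = rC r i j := by
  unfold Rvar rC
  split_ifs <;> simp

theorem rC_comm (r : PairIdx n → ℂ) (i j : Fin n) : rC r i j = rC r j i := by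
  simp only [← eval_Rvar, Rvar_comm]

theorem map_eval_cmPolyMatrix (r : PairIdx n → ℂ) :
    (cmPolyMatrix n).map (eval r) = cmOf r := by
  ext i j
  cases i using Fin.cases <;> cases j using Fin.cases <;> simp [cmOf, eval_Rvar]

theorem evalDF_pairIdx (r : PairIdx n → ℂ) (p : PairIdx n) :
    evalDF r p.1.1 p.1.2 = eval r (pderiv p (Fpoly n)) := by
  simp [evalDF, dF, p.2]

theorem evalDF_comm (r : PairIdx n → ℂ) (i j : Fin n) : evalDF r i j = evalDF r j i := by
  unfold evalDF dF
  rcases lt_trichotomy i j with h | rfl | h <;> simp [*, not_lt_of_gt]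

/-- The coordinate `R_p` of `ℂ^{q+2n+1}`. -/
abbrev rIdx (p : PairIdx n) : TVar n := Sum.inl p

/-- The coordinate `Z_i` of `ℂ^{q+2n+1}`. -/
abbrev zIdx (i : Fin n) : TVar n := Sum.inr (Sum.inl i)

/-- The coordinate `Δ` of `ℂ^{q+2n+1}`. -/
abbrev dIdx : TVar n := Sum.inr (Sum.inr (Sum.inl ()))

/-- The coordinate `M_i` of `ℂ^{q+2n+1}`. -/
abbrev mIdx (i : Fin n) : TVar n := Sum.inr (Sum.inr (Sum.inr i))

/-- The gradient of the function `z ↦ z_a z_b`, where `p = (a, b)`. -/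
def pairGrad {A : Type*} [AddZeroClass A] (z : Fin n → A) (p : PairIdx n) : Fin n → A :=
  Pi.single p.1.1 (z p.1.2) + Pi.single p.1.2 (z p.1.1)

theorem map_pairGrad {A B F : Type*} [AddZeroClass A] [AddZeroClass B] [FunLike F A B]
    [AddMonoidHomClass F A B] (f : F) (z : Fin n → A) (p : PairIdx n) (i : Fin n) :
    f (pairGrad z p i) = pairGrad (f ∘ z) p i := by
  simp [pairGrad, Pi.single_apply, apply_ite f]

theorem sum_pairGrad_mul_derivation {R A : Type*} [CommSemiring R] [CommSemiring A] [Algebra R A]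
    (D : Derivation R A A) (z : Fin n → A) (p : PairIdx n) :
    ∑ i, pairGrad z p i * D (z i) = D (z p.1.1 * z p.1.2) := by
  simp [pairGrad, add_mul, Finset.sum_add_distrib, Pi.single_apply, add_comm]

/-- The monomial multiplying `∂F/∂R_p` in `Ψ^a`, with `c2 = 2a`. -/
noncomputable def psiWeight (c2 : ℤ) (p : PairIdx n) : MvPolynomial (PairIdx n) ℂ :=
  if c2 < 0 then X p ^ (1 - c2).toNat
  else ∏ q ∈ Finset.univ.erase p, X q ^ (c2 - 1).toNat

theorem filter_ne_pairIdx (p : PairIdx n) : (Finset.univ.filter fun q : PairIdx n =>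
    ¬((q.1.1 = p.1.1 ∧ q.1.2 = p.1.2) ∨ (q.1.1 = p.1.2 ∧ q.1.2 = p.1.1))) =
    Finset.univ.erase p := by
  ext ⟨⟨a, b⟩, hab⟩
  obtain ⟨⟨c, d⟩, hcd⟩ := p
  grind

theorem Psi_eq_sum_pairIdx (c2 : ℤ) (r : PairIdx n → ℂ) (z : Fin n → ℂ) (i : Fin n) :
    Psi c2 r z i = ∑ p, eval r (psiWeight c2 p * pderiv p (Fpoly n)) * pairGrad z p i := by
  let weight (i j : Fin n) : ℂ :=
    if c2 < 0 then rC r i j ^ (1 - c2).toNat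
    else ∏ q : PairIdx n with ¬((q.1.1 = i ∧ q.1.2 = j) ∨ (q.1.1 = j ∧ q.1.2 = i)),
      r q ^ (c2 - 1).toNat
  have weight_comm (i j : Fin n) : weight i j = weight j i := by
    simp only [weight, rC_comm r i j, or_comm]
  have weight_pairIdx (p : PairIdx n) : weight p.1.1 p.1.2 = eval r (psiWeight c2 p) := by
    simp only [weight, filter_ne_pairIdx, ← eval_Rvar, Rvar_pairIdx, psiWeight]
    split_ifs <;> simp
  calc Psi c2 r z i = ∑ j ∈ Finset.univ \ {i}, weight i j * evalDF r i j * z j := by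
        unfold Psi weight
        split_ifs <;> rfl
    _ = _ := by
        rw [sum_ne_eq_sum_pairIdx fun i j => weight i j * evalDF r i j * z j]
        refine Finset.sum_congr rfl fun p _ => ?_
        simp only [weight_comm p.1.2, evalDF_comm r p.1.2, weight_pairIdx, evalDF_pairIdx]
        simp [pairGrad, Pi.single_apply, mul_add]

/-- `Ψ^a_i` as a polynomial on `ℂ^{q+2n+1}`, with `c2 = 2a`; the sum over `j ≠ i` is rewritten as a
sum over all pairs, in which only those containing `i` contribute. -/
noncomputable def psiPoly (c2 : ℤ) (i : Fin n) : MvPolynomial (TVar n) ℂ :=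
  ∑ p, rename rIdx (psiWeight c2 p * pderiv p (Fpoly n)) * pairGrad (X ∘ zIdx) p i

/-- `g^a_p` as a polynomial on `ℂ^{q+2n+1}`, with `c2 = 2a`. -/
noncomputable def gPoly (c2 : ℤ) (p : PairIdx n) : MvPolynomial (TVar n) ℂ :=
  if 0 < c2 then X (rIdx p) ^ c2.toNat - 1 - X (zIdx p.1.1) * X (zIdx p.1.2)
  else X (rIdx p) ^ (-c2).toNat * (X (zIdx p.1.1) * X (zIdx p.1.2) + 1) - 1

/-- The vector `u = (Δ, M_1 Z_1, …, M_n Z_n)`, for which `(Γ_0, …, Γ_n) = A(R) u`. -/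
def multiplierVec {A : Type*} [Mul A] (ξ : TVar n → A) : Fin (n + 1) → A :=
  Fin.cons (ξ dIdx) fun j => ξ (mIdx j) * ξ (zIdx j)

/-- `Γ_l` as a polynomial on `ℂ^{q+2n+1}`. -/
noncomputable def gammaPoly (l : Fin (n + 1)) : MvPolynomial (TVar n) ℂ :=
  ((cmPolyMatrix n).map (rename rIdx) *ᵥ multiplierVec X) l

theorem aeval_psiPoly {A : Type*} [CommRing A] [Algebra ℂ A] (ξ : TVar n → A) (c2 : ℤ)
    (i : Fin n) : aeval ξ (psiPoly c2 i) =
      ∑ p, aeval (ξ ∘ rIdx) (psiWeight c2 p * pderiv p (Fpoly n)) * pairGrad (ξ ∘ zIdx) p i := by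
  rw [psiPoly, map_sum]
  refine Finset.sum_congr rfl fun p _ => ?_
  rw [map_mul, aeval_rename, map_pairGrad]
  congr 2
  ext
  simp

theorem aeval_gammaPoly {A : Type*} [CommRing A] [Algebra ℂ A] (ξ : TVar n → A)
    (l : Fin (n + 1)) : aeval ξ (gammaPoly l) =
      ((cmPolyMatrix n).map (aeval (ξ ∘ rIdx)) *ᵥ multiplierVec ξ) l := by
  simp [gammaPoly, mulVec, dotProduct, aeval_rename, multiplierVec, Fin.sum_univ_succ]

theorem exists_adjugate_ne_zero {A : Type*} [CommRing A] [Algebra ℂ A] {ξ : TVar n → A} {c2 : ℤ}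
    {i : Fin n} (hi : aeval ξ (psiPoly c2 i) ≠ 0) :
    ∃ l, ((cmPolyMatrix n).map (aeval (ξ ∘ rIdx))).adjugate i.succ l ≠ 0 := by
  have map_adjugate : ((cmPolyMatrix n).map (aeval (ξ ∘ rIdx))).adjugate =
      (cmPolyMatrix n).adjugate.map (aeval (ξ ∘ rIdx)) := by
    simpa only [AlgHom.mapMatrix_apply] using
      (AlgHom.map_adjugate (aeval (R := ℂ) (ξ ∘ rIdx)) (cmPolyMatrix n)).symm
  contrapose! hi
  simp only [map_adjugate, map_apply] at hi
  have pderiv_eq_zero {p : PairIdx n} (hp : i = p.1.1 ∨ i = p.1.2) :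
      aeval (ξ ∘ rIdx) (pderiv p (Fpoly n)) = 0 := by
    rw [pderiv_Fpoly, map_mul]
    rcases hp with rfl | rfl
    · rw [hi, mul_zero]
    · rw [cmPolyMatrix_isSymm.adjugate.apply, hi, mul_zero]
  rw [aeval_psiPoly]
  refine Finset.sum_eq_zero fun p _ => ?_
  by_cases hp : i = p.1.1 ∨ i = p.1.2
  · rw [map_mul, pderiv_eq_zero hp, mul_zero, zero_mul]
  · rw [not_or] at hp
    simp [pairGrad, hp]

/-- `ξ` is a `K`-valued point of `V^a = Ṽ^a \ (W_1 ∪ W_3^a)`, with `c2 = 2a`. The set `W_2` does not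
appear because `W_2 ⊆ W_3^a`, see `exists_adjugate_ne_zero`. -/
structure IsVPoint {K : Type*} [Field K] [Algebra ℂ K] (c2 : ℤ) (ξ : TVar n → K) : Prop where
  r_ne_zero (p : PairIdx n) : ξ (rIdx p) ≠ 0
  gPoly_eq_zero (p : PairIdx n) : aeval ξ (gPoly c2 p) = 0
  Fpoly_eq_zero : aeval ξ (rename rIdx (Fpoly n)) = 0
  gammaPoly_eq_zero (l : Fin (n + 1)) : aeval ξ (gammaPoly l) = 0
  exists_psiPoly_ne_zero : ∃ i, aeval ξ (psiPoly c2 i) ≠ 0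

theorem isVPoint_of_mem_Vset {c2 : ℤ} {P : Pt n} (hP : P ∈ Vset n c2) : IsVPoint c2 P := by
  obtain ⟨⟨hg, hF, hΓ⟩, hW⟩ := hP
  simp only [Set.mem_union, not_or] at hW
  obtain ⟨⟨hW1, -⟩, hW3⟩ := hW
  have rPart_eq : P ∘ rIdx = rPart P := rfl
  refine ⟨fun p => ?_, fun p => ?_, ?_, fun l => ?_, ?_⟩
  · exact Finset.prod_ne_zero_iff.1 hW1 p (Finset.mem_univ p)
  · rw [← hg p, gPoly, gEval]
    split_ifs <;> simp [rPart, zPart]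
  · rw [← hF, ← map_eval_cmPolyMatrix, aeval_rename, rPart_eq, Fpoly]
    exact (eval (rPart P)).map_det _
  · rw [← hΓ l, aeval_gammaPoly, rPart_eq]
    cases l using Fin.cases <;>
      simp [GammaEval, mulVec, dotProduct, Fin.sum_univ_succ, multiplierVec, mPart, zPart, dPart,
        eval_Rvar, rC_comm, mul_comm]
  · obtain ⟨i, hi⟩ := not_forall.1 hW3
    refine ⟨i, ?_⟩
    rw [Psi_eq_sum_pairIdx] at hi
    rwa [aeval_psiPoly]

theorem IsZGenericPoint.isVPoint {K : Type*} [Field K] [Algebra ℂ K] {c2 : ℤ} {S : Set (Pt n)}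
    {ξ : TVar n → K} (hξ : IsZGenericPoint S ξ) (hS : S.Nonempty)
    (hSV : ∀ P ∈ S, IsVPoint c2 P) : IsVPoint c2 ξ := by
  have aeval_eq_zero {f : MvPolynomial (TVar n) ℂ} (hf : ∀ P ∈ S, aeval P f = 0) :
      aeval ξ f = 0 := (hξ f).2 hf
  have aeval_ne_zero {f : MvPolynomial (TVar n) ℂ} {P : Pt n} (hP : P ∈ S) (hf : aeval P f ≠ 0) :
      aeval ξ f ≠ 0 := fun h => hf ((hξ f).1 h P hP)
  obtain ⟨P, hP⟩ := hS
  obtain ⟨i, hi⟩ := (hSV P hP).exists_psiPoly_ne_zero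
  exact
    { r_ne_zero p := by
        simpa using aeval_ne_zero hP (f := X (rIdx p)) (by simpa using (hSV P hP).r_ne_zero p)
      gPoly_eq_zero p := aeval_eq_zero fun P hP => (hSV P hP).gPoly_eq_zero p
      Fpoly_eq_zero := aeval_eq_zero fun P hP => (hSV P hP).Fpoly_eq_zero
      gammaPoly_eq_zero l := aeval_eq_zero fun P hP => (hSV P hP).gammaPoly_eq_zero l
      exists_psiPoly_ne_zero := ⟨i, aeval_ne_zero hP hi⟩ }

variable {K : Type*} [Field K] [Algebra ℂ K] {c2 : ℤ} {ξ : TVar n → K}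

namespace IsVPoint

theorem exists_psiWeight_mul (hξ : IsVPoint c2 ξ) (hc2 : c2 ≠ 0) :
    ∃ κ : K, κ ≠ 0 ∧ ∀ (D : Derivation ℂ K K) (p : PairIdx n),
      aeval (ξ ∘ rIdx) (psiWeight c2 p) * D (ξ (zIdx p.1.1) * ξ (zIdx p.1.2)) =
        κ * D (ξ (rIdx p)) := by
  have : CharZero K := charZero_of_injective_algebraMap (FaithfulSMul.algebraMap_injective ℂ K)
  rcases hc2.lt_or_gt with hneg | hpos
  · refine ⟨-((-c2).toNat : K), neg_ne_zero.2 (Nat.cast_ne_zero.2 (by omega)), fun D p => ?_⟩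
    have hg : ξ (rIdx p) ^ (-c2).toNat * (ξ (zIdx p.1.1) * ξ (zIdx p.1.2) + 1) = 1 := by
      simpa [gPoly, hneg.not_gt, sub_eq_zero] using hξ.gPoly_eq_zero p
    have exponent_eq : (1 - c2).toNat = (-c2).toNat + 1 := by omega
    simpa [psiWeight, hneg, exponent_eq] using pow_succ_mul_derivation_of_pow_mul_eq_one D hg
  · refine ⟨c2.toNat * ∏ q, ξ (rIdx q) ^ (c2 - 1).toNat, ?_, fun D p => ?_⟩
    · refine mul_ne_zero (Nat.cast_ne_zero.2 (by omega)) ?_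
      exact Finset.prod_ne_zero_iff.2 fun q _ => pow_ne_zero _ (hξ.r_ne_zero q)
    have hg : ξ (rIdx p) ^ c2.toNat - 1 = ξ (zIdx p.1.1) * ξ (zIdx p.1.2) := by
      simpa [gPoly, hpos, sub_eq_zero (b := _ * _)] using hξ.gPoly_eq_zero p
    have exponent_eq : c2.toNat - 1 = (c2 - 1).toNat := by omega
    rw [← hg, map_sub, D.map_one_eq_zero, sub_zero, D.leibniz_pow, exponent_eq,
      ← Finset.prod_erase_mul _ _ (Finset.mem_univ p)]
    simp only [psiWeight, hpos.not_gt, if_false, map_prod, map_pow, aeval_X, Function.comp_apply,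
      smul_eq_mul, nsmul_eq_mul]
    ring

theorem sum_psiPoly_mul_derivation (hξ : IsVPoint c2 ξ) (hc2 : c2 ≠ 0) (D : Derivation ℂ K K) :
    ∑ i, aeval ξ (psiPoly c2 i) * D (ξ (zIdx i)) = 0 := by
  obtain ⟨κ, -, hκ⟩ := hξ.exists_psiWeight_mul hc2
  calc ∑ i, aeval ξ (psiPoly c2 i) * D (ξ (zIdx i))
      = ∑ p, aeval (ξ ∘ rIdx) (psiWeight c2 p * pderiv p (Fpoly n)) *
          D (ξ (zIdx p.1.1) * ξ (zIdx p.1.2)) := by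
        simp only [aeval_psiPoly, Finset.sum_mul, mul_assoc]
        rw [Finset.sum_comm]
        simp only [← Finset.mul_sum]
        refine Finset.sum_congr rfl fun p _ => ?_
        congr 1
        exact sum_pairGrad_mul_derivation D (ξ ∘ zIdx) p
    _ = ∑ p, κ * (aeval (ξ ∘ rIdx) (pderiv p (Fpoly n)) * D (ξ (rIdx p))) := by
        refine Finset.sum_congr rfl fun p _ => ?_
        rw [map_mul]
        linear_combination aeval (ξ ∘ rIdx) (pderiv p (Fpoly n)) * hκ D p
    _ = κ * D (aeval (ξ ∘ rIdx) (Fpoly n)) := by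
        rw [derivation_aeval, Finset.mul_sum]
        rfl
    _ = 0 := by rw [← aeval_rename, hξ.Fpoly_eq_zero, map_zero, mul_zero]

theorem derivation_r_eq_zero (hξ : IsVPoint c2 ξ) (hc2 : c2 ≠ 0) {D : Derivation ℂ K K}
    (hz : ∀ i, D (ξ (zIdx i)) = 0) (p : PairIdx n) : D (ξ (rIdx p)) = 0 := by
  obtain ⟨κ, κ_ne_zero, hκ⟩ := hξ.exists_psiWeight_mul hc2
  refine (mul_eq_zero.1 ((hκ D p).symm.trans ?_)).resolve_left κ_ne_zero
  simp [hz]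

theorem derivation_multiplierVec_eq_zero (hξ : IsVPoint c2 ξ) {D : Derivation ℂ K K}
    (hr : ∀ p, D (ξ (rIdx p)) = 0) {i : Fin n} (hi : aeval ξ (psiPoly c2 i) ≠ 0)
    (hm : D (ξ (mIdx i) * ξ (zIdx i)) = 0) : D ∘ multiplierVec ξ = 0 := by
  obtain ⟨l, hl⟩ := exists_adjugate_ne_zero hi
  refine eq_zero_of_mulVec_eq_zero_of_adjugate_ne_zero ?_ hl hm
  have matrix_const (j k : Fin (n + 1)) :
      D ((cmPolyMatrix n).map (aeval (ξ ∘ rIdx)) j k) = 0 := by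
    simp only [map_apply, derivation_aeval, Function.comp_apply, hr, smul_zero,
      Finset.sum_const_zero]
  have mulVec_eq_zero :
      (cmPolyMatrix n).map (aeval (ξ ∘ rIdx)) *ᵥ multiplierVec ξ = 0 := by
    ext k
    rw [← aeval_gammaPoly, hξ.gammaPoly_eq_zero, Pi.zero_apply]
  rw [← derivation_mulVec D matrix_const, mulVec_eq_zero]
  ext
  simp

theorem exists_parameters (hξ : IsVPoint c2 ξ) (hc2 : c2 ≠ 0) :
    ∃ w : Fin n → K, ∀ D : Derivation ℂ K K, (∀ j, D (w j) = 0) → ∀ v, D (ξ v) = 0 := by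
  classical
  obtain ⟨i, hi⟩ := hξ.exists_psiPoly_ne_zero
  -- If `z_j = 0` then `m_j` is invisible to the relations `Γ_l = 0`, which involve only `m_j z_j`.
  refine ⟨fun j => if j = i ∨ ξ (zIdx j) = 0 then ξ (mIdx j) else ξ (zIdx j), fun D hD => ?_⟩
  have hz_ne (j : Fin n) (hj : j ≠ i) : D (ξ (zIdx j)) = 0 := by
    by_cases h : ξ (zIdx j) = 0
    · rw [h, map_zero]
    · simpa [hj, h] using hD j
  have hz (j : Fin n) : D (ξ (zIdx j)) = 0 := by
    have sum_eq := hξ.sum_psiPoly_mul_derivation hc2 D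
    rw [Fintype.sum_eq_single i fun j hj => by rw [hz_ne j hj, mul_zero]] at sum_eq
    rcases eq_or_ne j i with rfl | hj
    · exact (mul_eq_zero.1 sum_eq).resolve_left hi
    · exact hz_ne j hj
  have hr := hξ.derivation_r_eq_zero hc2 hz
  have hmi : D (ξ (mIdx i)) = 0 := by simpa using hD i
  have hu := hξ.derivation_multiplierVec_eq_zero hr hi (by simp [hz, hmi])
  have hm (j : Fin n) : D (ξ (mIdx j)) = 0 := by
    by_cases h : ξ (zIdx j) = 0
    · simpa [h] using hD j
    · simpa [multiplierVec, hz, h] using congrFun hu j.succ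
  rintro (p | j | ⟨⟩ | j)
  exacts [hr p, hz j, congrFun hu 0, hm j]

end IsVPoint

end CayleyMenger

/-- For every nonzero semi-integer `a` (`c2 = 2a`), the quasi-affine
set `V^a ⊆ ℂ^{q+2n+1}` has dimension at most `n`. -/
theorem statement16 {n : ℕ} (hn : 3 ≤ n) (c2 : ℤ) (hc2 : c2 ≠ 0) :
    DimLE (Vset n c2) n :=
  dimLE_of_forall_isZGenericPoint fun _ hSV hS _ _ _ _ hξ =>
    (hξ.isVPoint hS.1 fun _ hP => isVPoint_of_mem_Vset (hSV hP)).exists_parameters hc2
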